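/- arXiv:2501.08151 — 3 statements merged into one kernel-verified Lean document; each statement's English description precedes it below -/
import Mathlib

section
/- Let X_1, …, X_N be jointly Gaussian centred random variables with Var X_i > 0 for each i, and let k_1, …, k_N ∈ ℕ. Then E[∏_{i=1}^N H_{k_i}(X_i; Var X_i)] = Σ_P ∏_{{(i,j),(i′,j′)} ∈ P} E[X_i · X_{i′}], where the sum runs over all pairings P of the half-edge set H = {(i,j) : 1 ≤ i ≤ N, 1 ≤ j ≤ k_i} (the sum being 0 if no such pairing exists). -/
open MeasureTheory ProbabilityTheory

/-!
For a Gaussian vector, `X b - cov (X a, X b) / Var (X a) * X a` is uncorrelated with `X a`, hence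
independent of it. Freezing these residuals reduces Stein's identity
`E[X a * p(X)] = ∑ b, cov (X a, X b) * E[∂_b p(X)]` for a centred vector to integration by parts
against a Gaussian density on the line.

Adding a factor `X a` to a Wick monomial `W` gives `X a * W - Var (X a) * ∂_a W`, and the
subtracted term cancels exactly the self-pairing `b = a` in Stein's identity. Since `∂_b` removes
one factor `X b`, with multiplicity its exponent, what remains is the expansion of a hafnian along
the partner of a distinguished half-edge, with weight zero for pairs at the same vertex.
-/

open scoped ENNReal NNReal

section Hafnian

variable {V : Type*}

open Classical in
/-- The pairings of `S`, i.e. the partitions of `S` into two-element blocks, each block being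
encoded as an unordered pair. -/
noncomputable def pairings (S : Finset V) : Finset (Finset (Sym2 V)) :=
  {P ∈ S.sym2.powerset | (∀ p ∈ P, ¬ p.IsDiag) ∧ ∀ h ∈ S, ∃! p, p ∈ P ∧ h ∈ p}

/-- The hafnian of the symmetric matrix `w` restricted to `S`. -/
noncomputable def hafnian {R : Type*} [CommSemiring R] (w : Sym2 V → R) (S : Finset V) : R :=
  ∑ P ∈ pairings S, ∏ p ∈ P, w p

lemma mem_pairings {S : Finset V} {P : Finset (Sym2 V)} :
    P ∈ pairings S ↔
      P ⊆ S.sym2 ∧ (∀ p ∈ P, ¬ p.IsDiag) ∧ ∀ h ∈ S, ∃! p, p ∈ P ∧ h ∈ p := by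
  simp [pairings]

lemma pairings_empty : pairings (∅ : Finset V) = {∅} := by
  ext P
  simp +contextual [mem_pairings, iff_def]

section DecidableEq

variable [DecidableEq V] {S : Finset V} {P Q : Finset (Sym2 V)} {a h : V}

lemma mk_notMem_of_mem_pairings_erase (hQ : Q ∈ pairings (S.erase h)) : s(a, h) ∉ Q := fun hp ↦ by
  simpa using (mem_pairings.1 hQ).1 hp

lemma insert_mem_pairings_insert (ha : a ∉ S) (hh : h ∈ S) (hQ : Q ∈ pairings (S.erase h)) :
    insert s(a, h) Q ∈ pairings (insert a S) := by
  obtain ⟨hsub, hdiag, huniq⟩ := mem_pairings.1 hQ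
  have hmem : ∀ p ∈ Q, ∀ g ∈ p, g ≠ h ∧ g ∈ S := fun p hp g hg ↦
    Finset.mem_erase.1 (Finset.mem_sym2_iff.1 (hsub hp) g hg)
  refine mem_pairings.2 ⟨fun p hp ↦ Finset.mem_sym2_iff.2 fun g hg ↦ ?_, fun p hp ↦ ?_,
    fun g hg ↦ ?_⟩
  · grind
  · grind [Sym2.mk_isDiag_iff]
  · by_cases hg' : g ∈ s(a, h)
    · exact ⟨s(a, h), by grind, by grind⟩
    · obtain ⟨p, hp, hp_uniq⟩ := huniq g (by grind)
      exact ⟨p, by grind, by grind⟩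

lemma erase_mem_pairings_erase (ha : a ∉ S) (hP : P ∈ pairings (insert a S)) (hp : s(a, h) ∈ P) :
    P.erase s(a, h) ∈ pairings (S.erase h) := by
  obtain ⟨hsub, hdiag, huniq⟩ := mem_pairings.1 hP
  have hmem : ∀ p ∈ P, ∀ g ∈ p, g = a ∨ g ∈ S := fun p hp g hg ↦
    Finset.mem_insert.1 (Finset.mem_sym2_iff.1 (hsub hp) g hg)
  have heq : ∀ p ∈ P, ∀ g ∈ p, g ∈ s(a, h) → p = s(a, h) := fun p hpP g hg hg' ↦
    (huniq g (Finset.mem_insert.2 (hmem p hpP g hg))).unique ⟨hpP, hg⟩ ⟨hp, hg'⟩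
  refine mem_pairings.2 ⟨fun p hp ↦ Finset.mem_sym2_iff.2 fun g hg ↦ ?_, fun p hp ↦ ?_,
    fun g hg ↦ ?_⟩
  · grind
  · grind
  · obtain ⟨p, hp, hp_uniq⟩ := huniq g (by grind)
    have hg' : g ∉ s(a, h) := by grind
    have hne : p ≠ s(a, h) := fun heq ↦ hg' (heq ▸ hp.2)
    exact ⟨p, ⟨Finset.mem_erase.2 ⟨hne, hp.1⟩, hp.2⟩, by grind⟩

lemma exists_mk_mem_of_mem_pairings_insert (hP : P ∈ pairings (insert a S)) :
    ∃ h ∈ S, s(a, h) ∈ P := by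
  obtain ⟨hsub, hdiag, huniq⟩ := mem_pairings.1 hP
  obtain ⟨p, ⟨hp, hap⟩, -⟩ := huniq a (Finset.mem_insert_self a S)
  obtain ⟨h, rfl⟩ := Sym2.mem_iff_exists.1 hap
  have hne : h ≠ a := fun h_eq ↦ hdiag _ hp (Sym2.mk_isDiag_iff.2 h_eq.symm)
  have hh : h ∈ insert a S := Finset.mem_sym2_iff.1 (hsub hp) h (Sym2.mem_mk_right a h)
  exact ⟨h, Finset.mem_of_mem_insert_of_ne hh hne, hp⟩

lemma pairings_insert (ha : a ∉ S) :
    pairings (insert a S) =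
      S.biUnion fun h ↦ (pairings (S.erase h)).image (insert s(a, h)) := by
  ext P
  simp only [Finset.mem_biUnion, Finset.mem_image]
  constructor
  · intro hP
    obtain ⟨h, hh, hp⟩ := exists_mk_mem_of_mem_pairings_insert hP
    exact ⟨h, hh, P.erase s(a, h), erase_mem_pairings_erase ha hP hp, Finset.insert_erase hp⟩
  · rintro ⟨h, hh, Q, hQ, rfl⟩
    exact insert_mem_pairings_insert ha hh hQ

end DecidableEq

variable {R : Type*} [CommSemiring R] (w : Sym2 V → R)

lemma hafnian_empty : hafnian w ∅ = 1 := by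
  simp [hafnian, pairings_empty]

lemma hafnian_insert [DecidableEq V] {S : Finset V} {a : V} (ha : a ∉ S) :
    hafnian w (insert a S) = ∑ h ∈ S, w s(a, h) * hafnian w (S.erase h) := by
  have hdisj : (S : Set V).PairwiseDisjoint
      fun h ↦ (pairings (S.erase h)).image (insert s(a, h)) := by
    refine fun h _ h' _ hne ↦ Finset.disjoint_left.2 fun P hP hP' ↦ hne ?_
    obtain ⟨Q, -, rfl⟩ := Finset.mem_image.1 hP
    obtain ⟨Q', hQ', heq⟩ := Finset.mem_image.1 hP'
    have hmem : s(a, h) ∈ insert s(a, h') Q' := heq ▸ Finset.mem_insert_self _ Q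
    have hnot : s(a, h) ∉ Q' := fun hp ↦ ha <| Finset.mem_of_mem_erase <|
      Finset.mem_sym2_iff.1 ((mem_pairings.1 hQ').1 hp) a (Sym2.mem_mk_left a h)
    exact Sym2.congr_right.1 ((Finset.mem_insert.1 hmem).resolve_right hnot)
  simp only [hafnian, pairings_insert ha, Finset.sum_biUnion hdisj, Finset.mul_sum]
  refine Finset.sum_congr rfl fun h _ ↦ ?_
  rw [Finset.sum_image fun Q hQ Q' hQ' heq ↦ by
    rw [← Finset.erase_insert (mk_notMem_of_mem_pairings_erase hQ), heq,
      Finset.erase_insert (mk_notMem_of_mem_pairings_erase hQ')]]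
  exact Finset.sum_congr rfl fun Q hQ ↦
    Finset.prod_insert (mk_notMem_of_mem_pairings_erase hQ)

open Classical in
lemma hafnian_ite_isDiag_map {ι : Type*} (f : V → ι) (S : Finset V) :
    hafnian (fun p ↦ if (p.map f).IsDiag then 0 else w p) S =
      ∑ P ∈ pairings S with ∀ p ∈ P, ¬ (p.map f).IsDiag, ∏ p ∈ P, w p := by
  rw [hafnian, Finset.sum_filter]
  refine Finset.sum_congr rfl fun P _ ↦ ?_
  split_ifs with hP
  · exact Finset.prod_congr rfl fun p hp ↦ if_neg (hP p hp)
  · push Not at hP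
    obtain ⟨p, hp, hdiag⟩ := hP
    exact Finset.prod_eq_zero hp (if_pos hdiag)

lemma not_isDiag_map_iff {ι : Type*} {f : V → ι} {p : Sym2 V} (hp : ¬ p.IsDiag) :
    ¬ (p.map f).IsDiag ↔ ∀ h₁ h₂, h₁ ∈ p → h₂ ∈ p → h₁ ≠ h₂ → f h₁ ≠ f h₂ := by
  induction p using Sym2.ind with
  | _ x y => grind [Sym2.map_mk, Sym2.mk_isDiag_iff]

end Hafnian

section FiberCard

variable {V ι : Type*} (f : V → ι)

open Classical in
/-- The number of elements of `S` in each fibre of `f`; for half-edges `S` attached to the vertices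
by `f`, this is the arity of each vertex. -/
noncomputable def fiberCard (S : Finset V) (i : ι) : ℕ := Finset.card {h ∈ S | f h = i}

lemma fiberCard_sigma_fst_univ [Fintype ι] (k : ι → ℕ) :
    fiberCard (Sigma.fst : (Σ i, Fin (k i)) → ι) Finset.univ = k := by
  classical
  ext i
  have h_fiber : ({h | h.1 = i} : Finset (Σ i, Fin (k i))) =
      Finset.univ.map (.sigmaMk i) := by
    ext ⟨j, x⟩
    aesop
  rw [fiberCard, Finset.filter_congr_decidable, h_fiber, Finset.card_map, Finset.card_fin]

variable [DecidableEq V] [DecidableEq ι] {S : Finset V} {h : V}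

lemma fiberCard_insert (hh : h ∉ S) :
    fiberCard f (insert h S) = fiberCard f S + Pi.single (f h) 1 := by
  ext i
  by_cases hi : f h = i
  · subst hi
    simp [fiberCard, Finset.filter_insert, hh]
  · simp [fiberCard, Finset.filter_insert, hi, Ne.symm hi]

lemma fiberCard_erase (hh : h ∈ S) :
    fiberCard f (S.erase h) = fiberCard f S - Pi.single (f h) 1 := by
  rw [eq_comm, ← Finset.insert_erase hh, fiberCard_insert f (Finset.notMem_erase h S),
    Finset.erase_insert (Finset.notMem_erase h S), add_tsub_cancel_right]

end FiberCard

section Hermite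

variable {R : Type*} [CommRing R]

/-- The Hermite polynomial associated with variance `v`, so that `hermiteVar (Var X) n` evaluated at
a centred Gaussian `X` is its `n`-th Wick power. The recursion avoids the square root of `v` in
`√v ^ n * He_n (x / √v)` and makes sense also for `v = 0`, where it gives `X ^ n`. -/
noncomputable def hermiteVar (v : R) : ℕ → Polynomial R
  | 0 => 1
  | n + 1 => Polynomial.X * hermiteVar v n - Polynomial.C v * (hermiteVar v n).derivative

lemma hermiteVar_zero (v : R) : hermiteVar v 0 = 1 := rfl

lemma hermiteVar_succ (v : R) (n : ℕ) :
    hermiteVar v (n + 1) =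
      Polynomial.X * hermiteVar v n - Polynomial.C v * (hermiteVar v n).derivative := rfl

lemma derivative_hermiteVar_succ (v : R) (n : ℕ) :
    (hermiteVar v (n + 1)).derivative = (n + 1 : Polynomial R) * hermiteVar v n := by
  induction n with
  | zero => simp [hermiteVar_succ, hermiteVar_zero]
  | succ n ih =>
    rw [hermiteVar_succ v (n + 1)]
    simp only [Polynomial.derivative_sub, Polynomial.derivative_mul, Polynomial.derivative_X,
      Polynomial.derivative_C, ih, Polynomial.derivative_add, Polynomial.derivative_natCast,
      Polynomial.derivative_one]
    push_cast
    linear_combination (-(n + 1 : Polynomial R)) * hermiteVar_succ v n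

lemma derivative_hermiteVar (v : R) (n : ℕ) :
    (hermiteVar v n).derivative = (n : Polynomial R) * hermiteVar v (n - 1) := by
  cases n with
  | zero => simp [hermiteVar_zero]
  | succ n => simp [derivative_hermiteVar_succ]

lemma hermiteVar_sq_comp_C_mul_X (s : R) (n : ℕ) :
    (hermiteVar (s ^ 2) n).comp (Polynomial.C s * Polynomial.X) =
      Polynomial.C (s ^ n) * (Polynomial.hermite n).map (Int.castRingHom R) := by
  induction n with
  | zero => simp [hermiteVar_zero]
  | succ n ih =>
    have ih' := congrArg Polynomial.derivative ih
    simp only [Polynomial.derivative_comp, Polynomial.derivative_mul, Polynomial.derivative_C,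
      Polynomial.derivative_X, Polynomial.derivative_map] at ih'
    simp only [hermiteVar_succ, Polynomial.hermite_succ, Polynomial.sub_comp, Polynomial.mul_comp,
      Polynomial.X_comp, Polynomial.C_comp, Polynomial.map_sub, Polynomial.map_mul,
      Polynomial.map_X, Polynomial.pow_comp, Polynomial.C_pow] at ih ih' ⊢
    linear_combination (Polynomial.C s * Polynomial.X) * ih - Polynomial.C s * ih'

lemma pow_mul_aeval_div_hermite {K : Type*} [Field K] {s : K} (hs : s ≠ 0) (n : ℕ) (x : K) :
    s ^ n * Polynomial.aeval (x / s) (Polynomial.hermite n) = (hermiteVar (s ^ 2) n).eval x := by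
  have h := congrArg (Polynomial.eval (x / s)) (hermiteVar_sq_comp_C_mul_X s n)
  simpa [Polynomial.eval_comp, mul_div_cancel₀ _ hs, Polynomial.aeval_def, Polynomial.eval_map]
    using h.symm

end Hermite

lemma eval_aeval_X {ι R : Type*} [CommSemiring R] (x : ι → R) (i : ι) (q : Polynomial R) :
    MvPolynomial.eval x (Polynomial.aeval (MvPolynomial.X i) q) = q.eval (x i) := by
  simpa [Polynomial.coe_aeval_eq_eval, MvPolynomial.coe_aeval_eq_eval] using
    (Polynomial.aeval_algHom_apply (MvPolynomial.aeval x) (MvPolynomial.X i) q).symm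

section WickMonomial

variable {ι R : Type*} [CommRing R] [Fintype ι]

/-- The Wick-ordered monomial `∏ i, :X i ^ n i:`, where `X i` has variance `v i`. -/
noncomputable def wickMonomial (v : ι → R) (n : ι → ℕ) : MvPolynomial ι R :=
  ∏ i, Polynomial.aeval (MvPolynomial.X i) (hermiteVar (v i) (n i))

lemma eval_wickMonomial (v x : ι → R) (n : ι → ℕ) :
    MvPolynomial.eval x (wickMonomial v n) = ∏ i, (hermiteVar (v i) (n i)).eval (x i) := by
  simp [wickMonomial, eval_aeval_X]

variable [DecidableEq ι]

lemma pderiv_prod_aeval_X (q : ι → Polynomial R) (a : ι) :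
    MvPolynomial.pderiv a (∏ i, Polynomial.aeval (MvPolynomial.X i) (q i)) =
      Polynomial.aeval (MvPolynomial.X a) (q a).derivative *
        ∏ i ∈ Finset.univ.erase a,
          Polynomial.aeval (MvPolynomial.X i : MvPolynomial ι R) (q i) := by
  have h_rest : MvPolynomial.pderiv a
      (∏ i ∈ Finset.univ.erase a,
        Polynomial.aeval (MvPolynomial.X i : MvPolynomial ι R) (q i)) = 0 := by
    refine Finset.prod_induction _ (MvPolynomial.pderiv a · = 0) (fun p q hp hq ↦ ?_)
      MvPolynomial.pderiv_one fun i hi ↦ ?_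
    · simp [hp, hq]
    · simp [Derivation.map_aeval, MvPolynomial.pderiv_X_of_ne (Finset.ne_of_mem_erase hi)]
  rw [← Finset.mul_prod_erase _ _ (Finset.mem_univ a), MvPolynomial.pderiv_mul, h_rest,
    Derivation.map_aeval, MvPolynomial.pderiv_X_self, smul_eq_mul, mul_one, mul_zero, add_zero]

lemma wickMonomial_eq_mul_prod_erase (v : ι → R) {m n : ι → ℕ} {a : ι}
    (hmn : ∀ i ≠ a, m i = n i) :
    wickMonomial v m = Polynomial.aeval (MvPolynomial.X a) (hermiteVar (v a) (m a)) *
      ∏ i ∈ Finset.univ.erase a, Polynomial.aeval (MvPolynomial.X i) (hermiteVar (v i) (n i)) := by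
  rw [wickMonomial, ← Finset.mul_prod_erase _ _ (Finset.mem_univ a),
    Finset.prod_congr rfl fun i hi ↦ by rw [hmn i (Finset.ne_of_mem_erase hi)]]

lemma pderiv_wickMonomial (v : ι → R) (n : ι → ℕ) (a : ι) :
    MvPolynomial.pderiv a (wickMonomial v n) = n a • wickMonomial v (n - Pi.single a 1) := by
  have h_off : ∀ i ≠ a, (n - Pi.single a 1 : ι → ℕ) i = n i := fun i hi ↦ by simp [hi]
  rw [wickMonomial_eq_mul_prod_erase v h_off, wickMonomial,
    pderiv_prod_aeval_X, derivative_hermiteVar]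
  simp [mul_assoc]

lemma wickMonomial_add_single (v : ι → R) (n : ι → ℕ) (a : ι) :
    wickMonomial v (n + Pi.single a 1) =
      MvPolynomial.X a * wickMonomial v n -
        MvPolynomial.C (v a) * MvPolynomial.pderiv a (wickMonomial v n) := by
  have h_off : ∀ i ≠ a, (n + Pi.single a 1 : ι → ℕ) i = n i := fun i hi ↦ by simp [hi]
  rw [wickMonomial_eq_mul_prod_erase v h_off, wickMonomial, pderiv_prod_aeval_X, Pi.add_apply,
    Pi.single_eq_same, hermiteVar_succ, ← Finset.mul_prod_erase _ _ (Finset.mem_univ a)]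
  simp only [map_sub, map_mul, Polynomial.aeval_X, Polynomial.aeval_C, MvPolynomial.algebraMap_eq]
  ring

end WickMonomial

lemma derivation_aeval {ι R A M : Type*} [Fintype ι] [CommRing R] [CommRing A] [Algebra R A]
    [AddCommGroup M] [Module R M] [Module A M] (D : Derivation R A M) (g : ι → A)
    (p : MvPolynomial ι R) :
    D (MvPolynomial.aeval g p) =
      ∑ i, MvPolynomial.aeval g (MvPolynomial.pderiv i p) • D (g i) := by
  classical
  induction p using MvPolynomial.induction_on with
  | C c => simp
  | add p q hp hq => simp only [map_add, hp, hq, add_smul, Finset.sum_add_distrib]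
  | mul_X p j hp =>
    simp only [map_mul, MvPolynomial.aeval_X, Derivation.leibniz, hp, smul_eq_mul, map_add,
      MvPolynomial.pderiv_X, add_smul, mul_smul, Finset.sum_add_distrib, Finset.smul_sum,
      Pi.single_apply]
    simp [Finset.sum_ite_eq]

section Moments

variable {Ω ι : Type*} {mΩ : MeasurableSpace Ω} {μ : Measure Ω} {X : ι → Ω → ℝ}

lemma memLp_eval_mvPolynomial [IsFiniteMeasure μ] (hX : ∀ i, ∀ q : ℝ≥0∞, q ≠ ∞ → MemLp (X i) q μ)
    (p : MvPolynomial ι ℝ) {q : ℝ≥0∞} (hq : q ≠ ∞) :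
    MemLp (fun ω ↦ MvPolynomial.eval (X · ω) p) q μ := by
  induction p using MvPolynomial.induction_on generalizing q with
  | C c => simpa using memLp_const c
  | add p₁ p₂ h₁ h₂ => simpa [Pi.add_def] using (h₁ hq).add (h₂ hq)
  | mul_X p i hp =>
    have hq2 : 2 * q ≠ ∞ := ENNReal.mul_ne_top (by simp) hq
    have : ENNReal.HolderTriple (2 * q) (2 * q) q := ⟨by
      rw [ENNReal.mul_inv (by simp) (by simp), ← add_mul, ENNReal.inv_two_add_inv_two, one_mul]⟩
    simpa [Pi.mul_def] using (hX i _ hq2).mul (hp hq2)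

lemma integrable_eval_mvPolynomial [Finite ι] (hX : HasGaussianLaw (fun ω i ↦ X i ω) μ)
    (p : MvPolynomial ι ℝ) : Integrable (fun ω ↦ MvPolynomial.eval (X · ω) p) μ := by
  have := hX.isProbabilityMeasure
  exact memLp_one_iff_integrable.1
    (memLp_eval_mvPolynomial (fun i q hq ↦ (hX.eval i).memLp hq) p ENNReal.one_ne_top)

end Moments

section Stein

lemma hasDerivAt_gaussianPDFReal (m : ℝ) (v : ℝ≥0) (x : ℝ) :
    HasDerivAt (gaussianPDFReal m v) (-((x - m) / v) * gaussianPDFReal m v x) x := by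
  have h_exponent : HasDerivAt (fun x : ℝ ↦ -(x - m) ^ 2 / (2 * v)) (-((x - m) / v)) x := by
    have h_sq := ((hasDerivAt_id' x).sub_const m).fun_pow 2
    refine (h_sq.fun_neg.div_const (2 * (v : ℝ))).congr_deriv ?_
    rcases eq_or_ne v 0 with rfl | hv
    · simp
    · simp only [Nat.cast_ofNat, Nat.add_one_sub_one, pow_one, mul_one]
      field_simp
  rw [gaussianPDFReal_def]
  exact (h_exponent.exp.const_mul _).congr_deriv (by ring)

lemma integrable_eval_gaussianReal (m : ℝ) (v : ℝ≥0) (q : Polynomial ℝ) :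
    Integrable (fun x ↦ q.eval x) (gaussianReal m v) := by
  have h := memLp_eval_mvPolynomial (μ := gaussianReal m v) (X := fun (_ : Unit) x ↦ x)
    (fun _ r hr ↦ memLp_id_gaussianReal' r hr) (q.aeval (MvPolynomial.X ())) ENNReal.one_ne_top
  simpa [eval_aeval_X, memLp_one_iff_integrable] using h

lemma integral_sub_mul_eval_gaussianReal (m : ℝ) (v : ℝ≥0) (q : Polynomial ℝ) :
    ∫ x, (x - m) * q.eval x ∂gaussianReal m v =
      v * ∫ x, q.derivative.eval x ∂gaussianReal m v := by
  rcases eq_or_ne v 0 with rfl | hv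
  · simp
  have hint (r : Polynomial ℝ) : Integrable (fun x ↦ r.eval x * gaussianPDFReal m v x) := by
    have := integrable_eval_gaussianReal m v r
    rw [gaussianReal_of_var_ne_zero _ hv, integrable_withDensity_iff (measurable_gaussianPDF _ _)
      (ae_of_all _ fun _ ↦ gaussianPDF_lt_top)] at this
    simpa [toReal_gaussianPDF] using this
  have hint_deriv : Integrable fun x ↦ q.eval x * (-((x - m) / v) * gaussianPDFReal m v x) := by
    refine (hint (Polynomial.C (-(1 / (v : ℝ))) * (Polynomial.X - Polynomial.C m) * q)).congr
      (ae_of_all _ fun x ↦ ?_)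
    simp only [Polynomial.eval_mul, Polynomial.eval_sub, Polynomial.eval_C, Polynomial.eval_X]
    ring
  have h_parts := integral_mul_deriv_eq_deriv_mul_of_integrable
    (fun x _ ↦ q.hasDerivAt x) (fun x _ ↦ hasDerivAt_gaussianPDFReal m v x)
    hint_deriv (hint _) (hint _)
  rw [integral_gaussianReal_eq_integral_smul hv, integral_gaussianReal_eq_integral_smul hv]
  calc ∫ x, gaussianPDFReal m v x • ((x - m) * q.eval x)
      = -v * ∫ x, q.eval x * (-((x - m) / v) * gaussianPDFReal m v x) := by
        rw [← integral_const_mul]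
        exact integral_congr_ae (ae_of_all _ fun x ↦ by
          simp only [smul_eq_mul]
          field_simp)
    _ = v * ∫ x, gaussianPDFReal m v x • q.derivative.eval x := by
        rw [h_parts]
        simp [mul_comm]

end Stein

section GaussianVector

variable {Ω ι : Type*} {mΩ : MeasurableSpace Ω} {μ : Measure Ω}

lemma integral_comp_prodMk_of_indepFun {E F : Type*} [MeasurableSpace E] [MeasurableSpace F]
    [IsFiniteMeasure μ] {Z : Ω → E} {Y : Ω → F} (hZY : Z ⟂ᵢ[μ] Y) (hZ : AEMeasurable Z μ)
    (hY : AEMeasurable Y μ) {f : E × F → ℝ} (hf : StronglyMeasurable f)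
    (hint : Integrable (fun ω ↦ f (Z ω, Y ω)) μ) :
    ∫ ω, f (Z ω, Y ω) ∂μ = ∫ y, ∫ z, f (z, y) ∂μ.map Z ∂μ.map Y := by
  have h_prod := hZY.map_prod_eq_prod_map_map hZ hY
  rw [← integral_map (hZ.prodMk hY) hf.aestronglyMeasurable, h_prod]
  refine integral_prod_symm f ?_
  rw [← h_prod]
  exact (integrable_map_measure hf.aestronglyMeasurable (hZ.prodMk hY)).2 hint

lemma covariance_eq_zero_of_variance_eq_zero [IsProbabilityMeasure μ] {Z Y : Ω → ℝ}
    (hZ : MemLp Z 2 μ) (h : Var[Z; μ] = 0) : cov[Z, Y; μ] = 0 := by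
  have h_ae := ae_eq_integral_of_variance_eq_zero hZ h
  refine integral_eq_zero_of_ae ?_
  filter_upwards [h_ae] with ω hω
  simp [hω]

lemma variance_mul_covariance_div_variance [IsProbabilityMeasure μ] {Z : Ω → ℝ}
    (hZ : MemLp Z 2 μ) (Y : Ω → ℝ) :
    Var[Z; μ] * (cov[Z, Y; μ] / Var[Z; μ]) = cov[Z, Y; μ] :=
  mul_div_cancel_of_imp' (covariance_eq_zero_of_variance_eq_zero hZ)

variable {X : ι → Ω → ℝ}

lemma indepFun_sub_covariance_div_variance_mul [Finite ι]
    (hX : HasGaussianLaw (fun ω i ↦ X i ω) μ) (a : ι) :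
    X a ⟂ᵢ[μ] fun ω b ↦ X b ω - cov[X a, X b; μ] / Var[X a; μ] * X a ω := by
  have := hX.isProbabilityMeasure
  have := Fintype.ofFinite ι
  have hL2 (b : ι) : MemLp (X b) 2 μ := (hX.eval b).memLp_two
  let K (b : ι) : ℝ := cov[X a, X b; μ] / Var[X a; μ]
  let L : (ι → ℝ) →L[ℝ] (Unit → ℝ) × (ι → ℝ) :=
    (ContinuousLinearMap.pi fun _ ↦ .proj a).prod
      (ContinuousLinearMap.pi fun b ↦ .proj b - K b • .proj a)
  have h_joint : HasGaussianLaw (fun ω ↦ (fun _ : Unit ↦ X a ω, fun b ↦ X b ω - K b * X a ω)) μ :=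
    hX.map L
  have h_indep := h_joint.indepFun_of_covariance_eval (X := fun _ : Unit ↦ X a)
    (Y := fun b ω ↦ X b ω - K b * X a ω) fun _ b ↦ by
    rw [covariance_fun_sub_right (hL2 a) (hL2 b) ((hL2 a).const_mul _), covariance_const_mul_right,
      covariance_self (hL2 a).aemeasurable, mul_comm, variance_mul_covariance_div_variance (hL2 a),
      sub_self]
  exact h_indep.comp (φ := fun z : Unit → ℝ ↦ z ()) (ψ := id) (by fun_prop) measurable_id

variable [Fintype ι]

lemma integral_sub_mul_eval_affine_gaussianReal (m : ℝ) (v : ℝ≥0) (K y : ι → ℝ)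
    (p : MvPolynomial ι ℝ) :
    ∫ z, (z - m) * MvPolynomial.eval (fun b ↦ K b * z + y b) p ∂gaussianReal m v =
      ∫ z, ∑ b, v * K b * MvPolynomial.eval (fun b ↦ K b * z + y b) (MvPolynomial.pderiv b p)
        ∂gaussianReal m v := by
  let g (b : ι) : Polynomial ℝ := Polynomial.C (K b) * Polynomial.X + Polynomial.C (y b)
  have eval_aeval (z : ℝ) (q : MvPolynomial ι ℝ) :
      MvPolynomial.eval (fun b ↦ K b * z + y b) q = (MvPolynomial.aeval g q).eval z := by
    have h := MvPolynomial.comp_aeval_apply g (Polynomial.aeval z) q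
    simpa [g, Polynomial.coe_aeval_eq_eval, MvPolynomial.coe_aeval_eq_eval] using h.symm
  have derivative_g (b : ι) : Polynomial.derivative' (g b) = Polynomial.C (K b) := by simp [g]
  have derivative_aeval : (MvPolynomial.aeval g p).derivative =
      ∑ b, MvPolynomial.aeval g (MvPolynomial.pderiv b p) * Polynomial.C (K b) := by
    simpa only [derivative_g, smul_eq_mul] using! derivation_aeval Polynomial.derivative' g p
  simp_rw [eval_aeval]
  rw [integral_sub_mul_eval_gaussianReal, ← integral_const_mul, derivative_aeval]
  simp [Polynomial.eval_finsetSum, Finset.mul_sum, mul_assoc, mul_comm (K _)]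

lemma integral_sub_mul_eval_of_indepFun {Z : Ω → ℝ} (hZ : HasGaussianLaw Z μ) {Y : Ω → ι → ℝ}
    (hY : ∀ b, ∀ q : ℝ≥0∞, q ≠ ∞ → MemLp (Y · b) q μ) (hZY : Z ⟂ᵢ[μ] Y) (K : ι → ℝ)
    (p : MvPolynomial ι ℝ) :
    ∫ ω, (Z ω - μ[Z]) * MvPolynomial.eval (fun b ↦ K b * Z ω + Y ω b) p ∂μ =
      ∑ b, Var[Z; μ] * K b *
        ∫ ω, MvPolynomial.eval (fun b ↦ K b * Z ω + Y ω b) (MvPolynomial.pderiv b p) ∂μ := by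
  have := hZ.isProbabilityMeasure
  have hLp (b : ι) (q : ℝ≥0∞) (hq : q ≠ ∞) : MemLp (fun ω ↦ K b * Z ω + Y ω b) q μ :=
    ((hZ.memLp hq).const_mul (K b)).add (hY b q hq)
  have hint (q : MvPolynomial ι ℝ) :
      Integrable (fun ω ↦ MvPolynomial.eval (fun b ↦ K b * Z ω + Y ω b) q) μ :=
    memLp_one_iff_integrable.1 (memLp_eval_mvPolynomial hLp q ENNReal.one_ne_top)
  have hint_left : Integrable
      (fun ω ↦ (Z ω - μ[Z]) * MvPolynomial.eval (fun b ↦ K b * Z ω + Y ω b) p) μ :=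
    ((hZ.memLp_two).sub (memLp_const _)).integrable_mul
      (memLp_eval_mvPolynomial hLp p (ENNReal.ofNat_ne_top (n := 2)))
  have hcont (q : MvPolynomial ι ℝ) :
      Continuous fun z : ℝ × (ι → ℝ) ↦ MvPolynomial.eval (fun b ↦ K b * z.1 + z.2 b) q :=
    (MvPolynomial.continuous_eval q).comp (by fun_prop)
  have h_freeze {f : ℝ × (ι → ℝ) → ℝ} (hf : Continuous f) :=
    integral_comp_prodMk_of_indepFun hZY hZ.aemeasurable
      (aemeasurable_pi_lambda Y fun b ↦ (hY b 1 ENNReal.one_ne_top).aemeasurable)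
      hf.stronglyMeasurable
  simp_rw [← integral_const_mul]
  rw [← integral_finsetSum _ fun b _ ↦ (hint _).const_mul _,
    h_freeze (f := fun z ↦ (z.1 - μ[Z]) * MvPolynomial.eval (fun b ↦ K b * z.1 + z.2 b) p)
      (by fun_prop) hint_left,
    h_freeze (f := fun z ↦ ∑ b, Var[Z; μ] * K b *
      MvPolynomial.eval (fun b ↦ K b * z.1 + z.2 b) (MvPolynomial.pderiv b p)) (by fun_prop)
      (integrable_finsetSum _ fun b _ ↦ (hint _).const_mul _), hZ.map_eq_gaussianReal]
  simp_rw [integral_sub_mul_eval_affine_gaussianReal, Real.coe_toNNReal _ (variance_nonneg Z μ)]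

lemma integral_sub_integral_mul_eval (hX : HasGaussianLaw (fun ω i ↦ X i ω) μ) (a : ι)
    (p : MvPolynomial ι ℝ) :
    ∫ ω, (X a ω - μ[X a]) * MvPolynomial.eval (X · ω) p ∂μ =
      ∑ b, cov[X a, X b; μ] * ∫ ω, MvPolynomial.eval (X · ω) (MvPolynomial.pderiv b p) ∂μ := by
  have := hX.isProbabilityMeasure
  have hLp (b : ι) {q : ℝ≥0∞} (hq : q ≠ ∞) : MemLp (X b) q μ := (hX.eval b).memLp hq
  have h := integral_sub_mul_eval_of_indepFun (hX.eval a)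
    (fun b q hq ↦ (hLp b hq).sub ((hLp a hq).const_mul _))
    (indepFun_sub_covariance_div_variance_mul hX a) (fun b ↦ cov[X a, X b; μ] / Var[X a; μ]) p
  simpa [variance_mul_covariance_div_variance (hX.eval a).memLp_two] using h

end GaussianVector

section Wick

variable {Ω ι : Type*} {mΩ : MeasurableSpace Ω} {μ : Measure Ω} [Fintype ι] {X : ι → Ω → ℝ}

lemma integral_eval_wickMonomial_add_single [DecidableEq ι]
    (hX : HasGaussianLaw (fun ω i ↦ X i ω) μ) (n : ι → ℕ) {a : ι} (ha : μ[X a] = 0) :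
    ∫ ω, MvPolynomial.eval (X · ω) (wickMonomial (Var[X ·; μ]) (n + Pi.single a 1)) ∂μ =
      ∑ b ∈ Finset.univ.erase a, n b • (cov[X a, X b; μ] *
        ∫ ω, MvPolynomial.eval (X · ω) (wickMonomial (Var[X ·; μ]) (n - Pi.single b 1)) ∂μ) := by
  set W := wickMonomial (Var[X ·; μ])
  have h_stein : ∫ ω, X a ω * MvPolynomial.eval (X · ω) (W n) ∂μ = ∑ b, cov[X a, X b; μ] *
      ∫ ω, MvPolynomial.eval (X · ω) (MvPolynomial.pderiv b (W n)) ∂μ := by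
    simpa [ha] using integral_sub_integral_mul_eval hX a (W n)
  have hint := integrable_eval_mvPolynomial hX
  have hint_mul : Integrable (fun ω ↦ X a ω * MvPolynomial.eval (X · ω) (W n)) μ :=
    (hint (MvPolynomial.X a * W n)).congr (ae_of_all _ fun ω ↦ by simp)
  calc ∫ ω, MvPolynomial.eval (X · ω) (W (n + Pi.single a 1)) ∂μ
      = ∫ ω, X a ω * MvPolynomial.eval (X · ω) (W n) ∂μ - cov[X a, X a; μ] *
          ∫ ω, MvPolynomial.eval (X · ω) (MvPolynomial.pderiv a (W n)) ∂μ := by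
        rw [covariance_self (hX.eval a).aemeasurable, ← integral_const_mul,
          ← integral_sub hint_mul ((hint _).const_mul _)]
        simp [W, wickMonomial_add_single]
    _ = ∑ b ∈ Finset.univ.erase a, cov[X a, X b; μ] *
          ∫ ω, MvPolynomial.eval (X · ω) (MvPolynomial.pderiv b (W n)) ∂μ := by
        rw [h_stein, ← Finset.add_sum_erase _ _ (Finset.mem_univ a), add_sub_cancel_left]
    _ = ∑ b ∈ Finset.univ.erase a, n b • (cov[X a, X b; μ] *
          ∫ ω, MvPolynomial.eval (X · ω) (W (n - Pi.single b 1)) ∂μ) := by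
        simp [W, pderiv_wickMonomial, integral_const_mul, mul_left_comm]

open Classical in
lemma integral_eval_wickMonomial_fiberCard (hX : HasGaussianLaw (fun ω i ↦ X i ω) μ)
    (h0 : ∀ i, μ[X i] = 0) {V : Type*} (f : V → ι) {w : Sym2 V → ℝ}
    (hw : ∀ h h', w s(h, h') = cov[X (f h), X (f h'); μ]) (S : Finset V) :
    ∫ ω, MvPolynomial.eval (X · ω) (wickMonomial (Var[X ·; μ]) (fiberCard f S)) ∂μ =
      hafnian (fun p ↦ if (p.map f).IsDiag then 0 else w p) S := by
  have := hX.isProbabilityMeasure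
  let E (n : ι → ℕ) : ℝ := ∫ ω, MvPolynomial.eval (X · ω) (wickMonomial (Var[X ·; μ]) n) ∂μ
  induction S using Finset.strongInduction with
  | H S ih =>
  rcases S.eq_empty_or_nonempty with rfl | ⟨a, haS⟩
  · simp [hafnian_empty, wickMonomial, hermiteVar_zero, fiberCard]
  obtain ⟨T, haT, rfl⟩ : ∃ T, a ∉ T ∧ insert a T = S :=
    ⟨S.erase a, Finset.notMem_erase a S, Finset.insert_erase haS⟩
  let G (b : ι) : ℝ :=
    (if f a = b then 0 else cov[X (f a), X b; μ]) * E (fiberCard f T - Pi.single b 1)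
  calc E (fiberCard f (insert a T))
      = ∑ b ∈ Finset.univ.erase (f a), fiberCard f T b • (cov[X (f a), X b; μ] *
          E (fiberCard f T - Pi.single b 1)) := by
        rw [fiberCard_insert f haT]
        exact integral_eval_wickMonomial_add_single hX _ (h0 _)
    _ = ∑ b, fiberCard f T b • G b := by
        rw [← Finset.sum_erase Finset.univ (a := f a) (by simp [G])]
        refine Finset.sum_congr rfl fun b hb ↦ ?_
        simp [G, (Finset.ne_of_mem_erase hb).symm]
    _ = ∑ h ∈ T, G (f h) := by
        simp [← Finset.sum_fiberwise' T f G, fiberCard]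
    _ = hafnian (fun p ↦ if (p.map f).IsDiag then 0 else w p) (insert a T) := by
        rw [hafnian_insert _ haT]
        refine Finset.sum_congr rfl fun h hh ↦ ?_
        rw [← ih (T.erase h) ((Finset.erase_subset h T).trans_ssubset (Finset.ssubset_insert haT)),
          fiberCard_erase f hh]
        simp [G, E, hw]

end Wick

lemma hasGaussianLaw_of_map_sum_eq_gaussianReal {Ω ι : Type*} {mΩ : MeasurableSpace Ω}
    {μ : Measure Ω} [Fintype ι] {X : ι → Ω → ℝ} (hX : ∀ i, AEMeasurable (X i) μ)
    (h : ∀ c : ι → ℝ, ∃ m v, μ.map (fun ω ↦ ∑ i, c i * X i ω) = gaussianReal m v) :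
    HasGaussianLaw (fun ω i ↦ X i ω) μ := by
  classical
  refine ⟨isGaussian_of_map_eq_gaussianReal fun L ↦ ?_⟩
  have hL : L ∘ (fun ω i ↦ X i ω) = fun ω ↦ ∑ i, L (if i = · then 1 else 0) * X i ω := by
    ext ω
    rw [Function.comp_apply, ← ContinuousLinearMap.coe_coe, LinearMap.pi_apply_eq_sum_univ]
    simp [mul_comm]
  rw [AEMeasurable.map_map_of_aemeasurable (by fun_prop) (by fun_prop), hL]
  exact h _

lemma integral_eq_zero_of_map_sum_eq_gaussianReal {Ω ι : Type*} {mΩ : MeasurableSpace Ω}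
    {μ : Measure Ω} [Fintype ι] {X : ι → Ω → ℝ} (hX : ∀ i, AEMeasurable (X i) μ)
    (h : ∀ c : ι → ℝ, ∃ v, μ.map (fun ω ↦ ∑ i, c i * X i ω) = gaussianReal 0 v) (i : ι) :
    μ[X i] = 0 := by
  classical
  obtain ⟨v, hv⟩ := h (Pi.single i 1)
  have h_law : HasLaw (X i) (gaussianReal 0 v) μ :=
    ⟨hX i, by simpa [Pi.single_apply] using hv⟩
  simp [h_law.integral_eq]

open Classical in
theorem stmt_2_general {Ω ι : Type*} {mΩ : MeasurableSpace Ω} {μ : Measure Ω} [Fintype ι]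
    {X : ι → Ω → ℝ} (hX : HasGaussianLaw (fun ω i ↦ X i ω) μ) (h0 : ∀ i, μ[X i] = 0)
    (k : ι → ℕ) :
    ∫ ω, ∏ i, (hermiteVar Var[X i; μ] (k i)).eval (X i ω) ∂μ
      = ∑ P ∈ Finset.univ.filter
            (fun P : Finset (Sym2 (Σ i : ι, Fin (k i))) =>
              (∀ p ∈ P, ¬ p.IsDiag) ∧
              (∀ h : Σ i : ι, Fin (k i), ∃! p, p ∈ P ∧ h ∈ p) ∧
              (∀ p ∈ P, ∀ h₁ h₂ : Σ i : ι, Fin (k i),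
                h₁ ∈ p → h₂ ∈ p → h₁ ≠ h₂ → h₁.1 ≠ h₂.1)),
          ∏ p ∈ P,
            Sym2.lift ⟨fun h₁ h₂ => ∫ ω, X h₁.1 ω * X h₂.1 ω ∂μ,
              fun h₁ h₂ => by simp_rw [mul_comm]⟩ p := by
  have hcov (i j : ι) : ∫ ω, X i ω * X j ω ∂μ = cov[X i, X j; μ] := by simp [covariance, h0]
  have h_wick := integral_eval_wickMonomial_fiberCard hX h0 (f := Sigma.fst)
    (w := Sym2.lift ⟨fun h₁ h₂ : Σ i, Fin (k i) ↦ ∫ ω, X h₁.1 ω * X h₂.1 ω ∂μ,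
      fun h₁ h₂ ↦ by simp_rw [mul_comm]⟩) (fun _ _ ↦ hcov _ _) Finset.univ
  rw [hafnian_ite_isDiag_map, fiberCard_sigma_fst_univ] at h_wick
  simp only [eval_wickMonomial] at h_wick
  rw [h_wick]
  refine Finset.sum_congr (Finset.ext fun P ↦ ?_) fun _ _ ↦ rfl
  simp only [Finset.mem_filter, mem_pairings, Finset.mem_univ, true_and, Finset.sym2_univ,
    Finset.subset_univ, true_imp_iff, and_assoc]
  refine and_congr_right fun hdiag ↦ and_congr_right fun _ ↦ ?_
  exact forall₂_congr fun p hp ↦ not_isDiag_map_iff (hdiag p hp)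

/- STATEMENT 2: Wick's theorem. For jointly Gaussian centred random variables
`X 1, …, X N` with positive variances and arities `k 1, …, k N`,
`E[∏ i, H_{k i}(X i; Var (X i))] = Σ_P ∏_{pairs {(i,j),(i',j')} ∈ P} E[X i · X i']`,
the sum running over all pairings `P` of the half-edge set `H = Σ i, Fin (k i)`:
partitions of `H` into two-element blocks no block of which contains two half-edges
attached to the same vertex.  Here `H_n(x;σ²) = σ^n He_n(x/σ)` with `He_n` the
probabilists Hermite polynomial. -/
open Classical in
theorem stmt_2
    {Ω : Type} [MeasureSpace Ω] [IsProbabilityMeasure (volume : Measure Ω)]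
    (N : ℕ) (X : Fin N → Ω → ℝ) (hX : ∀ i, Measurable (X i))
    (hGauss : ∀ c : Fin N → ℝ, ∃ σ : NNReal,
      Measure.map (fun ω => ∑ i, c i * X i ω) volume = gaussianReal 0 σ)
    (hV : ∀ i, 0 < variance (X i) volume)
    (k : Fin N → ℕ) :
    ∫ ω, ∏ i, (Real.sqrt (variance (X i) volume) ^ (k i) *
          Polynomial.aeval (X i ω / Real.sqrt (variance (X i) volume))
            (Polynomial.hermite (k i)))
      = ∑ P ∈ Finset.univ.filter
            (fun P : Finset (Sym2 (Σ i : Fin N, Fin (k i))) =>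
              (∀ p ∈ P, ¬ p.IsDiag) ∧
              (∀ h : Σ i : Fin N, Fin (k i), ∃! p, p ∈ P ∧ h ∈ p) ∧
              (∀ p ∈ P, ∀ h₁ h₂ : Σ i : Fin N, Fin (k i),
                h₁ ∈ p → h₂ ∈ p → h₁ ≠ h₂ → h₁.1 ≠ h₂.1)),
          ∏ p ∈ P,
            Sym2.lift ⟨fun h₁ h₂ => ∫ ω, X h₁.1 ω * X h₂.1 ω,
              fun h₁ h₂ => by simp_rw [mul_comm]⟩ p := by
  have hXm (i : Fin N) : AEMeasurable (X i) := (hX i).aemeasurable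
  simp_rw [pow_mul_aeval_div_hermite (Real.sqrt_pos.2 (hV _)).ne', Real.sq_sqrt (hV _).le]
  exact stmt_2_general (hasGaussianLaw_of_map_sum_eq_gaussianReal hXm fun c ↦ ⟨0, hGauss c⟩)
    (integral_eq_zero_of_map_sum_eq_gaussianReal hXm hGauss) k
end

section
/- For every pairing σ of (H, π), one has |Orb(σ)| · |Stab(σ)| = ∏_{k ∈ ℕ} β(k)! · (k!)^{β(k)}; in the paper's notation, the symmetry factor S_M(Φ(Γ)) of the multi-index of the Feynman diagram Γ encoded by σ equals N(Γ)·S_F(Γ), where N(Γ) = |Orb(σ)| is the number of pairings producing a diagram isomorphic to Γ and S_F(Γ) = |Stab(σ)| is the order of its automorphism group. -/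
/-!
By orbit–stabiliser, `|Orb(σ)| · |Stab(σ)|` is the order of the isomorphism group `G` of
`π : H → V`. Project `G` to `Perm V`. The kernel consists of the permutations of `H` preserving
every fibre of `π`, so it has `∏ v, (valence v)!` elements. A permutation of `V` lies in the image
if and only if it preserves valences, so the image has `∏ k, β(k)!` elements. Grouping the vertices
by valence turns the order of the kernel into `∏ k, (k!)^β(k)`.
-/

section FeynmanDiagram

open Equiv
open scoped Finset Nat

theorem card_conj_orbit_mul_card_conj_stabilizer {G K : Type*} [Group G] [Group K]
    (S : Subgroup G) (f : G →* K) (a : K) :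
    Nat.card {b : K // ∃ g ∈ S, f g * a * (f g)⁻¹ = b} *
      Nat.card {g : G // g ∈ S ∧ f g * a * (f g)⁻¹ = a} = Nat.card S := by
  let : MulAction S K := MulAction.compHom K (MulAut.conj.comp (f.comp S.subtype))
  let orbitEquiv : {b : K // ∃ g ∈ S, f g * a * (f g)⁻¹ = b} ≃ MulAction.orbit S a :=
    subtypeEquivRight fun _ ↦ ⟨fun ⟨g, hg, h⟩ ↦ ⟨⟨g, hg⟩, h⟩, fun ⟨g, h⟩ ↦ ⟨g, g.2, h⟩⟩
  let stabilizerEquiv : {g : G // g ∈ S ∧ f g * a * (f g)⁻¹ = a} ≃ MulAction.stabilizer S a :=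
    (subtypeSubtypeEquivSubtypeInter (· ∈ S) (fun g ↦ f g * a * (f g)⁻¹ = a)).symm
  rw [Nat.card_congr orbitEquiv, Nat.card_congr stabilizerEquiv, ← Nat.card_prod]
  exact Nat.card_congr (MulAction.orbitProdStabilizerEquivGroup S a)

theorem exists_equiv_comp_eq_iff_card_fiber_eq {α β γ : Type*} [Finite α] [Finite β]
    (f : α → γ) (g : β → γ) :
    (∃ e : α ≃ β, g ∘ e = f) ↔ ∀ c, Nat.card {a // f a = c} = Nat.card {b // g b = c} := by
  constructor
  · rintro ⟨e, rfl⟩ c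
    exact Nat.card_congr (e.subtypeEquiv fun _ ↦ Iff.rfl)
  · intro h
    let fiberEquiv (c : γ) : {a // f a = c} ≃ {b // g b = c} := (Finite.card_eq.1 (h c)).some
    exact ⟨ofFiberEquiv fiberEquiv, funext (ofFiberEquiv_map fiberEquiv)⟩

theorem card_perm_comp_eq_self {α κ : Type*} [Fintype α] [DecidableEq κ] {f : α → κ}
    {t : Finset κ} (hf : ∀ a, f a ∈ t) :
    Nat.card {g : Perm α // f ∘ g = f} = ∏ i ∈ t, (#{a | f a = i})! := by
  classical
  have image_subset : Finset.univ.image f ⊆ t := by simpa [Finset.subset_iff] using hf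
  rw [Nat.card_eq_fintype_card, DomMulAct.stabilizer_card']
  simp only [Fintype.card_subtype]
  refine Finset.prod_subset image_subset fun i _ hi ↦ ?_
  have fiber_empty : ({a | f a = i} : Finset α) = ∅ := by
    simpa [Finset.filter_eq_empty_iff] using hi
  rw [fiber_empty, Finset.card_empty, Nat.factorial_zero]

variable {H V : Type*} (π : H → V)

/-- The isomorphism group `G` of the half-edge structure `π : H → V`: the pairs of a permutation
of the vertices and a permutation of the half-edges that are compatible with `π`. -/
def isoGroup : Subgroup (Perm V × Perm H) where
  carrier := {g | π ∘ g.2 = g.1 ∘ π}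
  one_mem' := rfl
  mul_mem' {a b} (ha : π ∘ a.2 = a.1 ∘ π) (hb : π ∘ b.2 = b.1 ∘ π) := by
    change π ∘ a.2 ∘ b.2 = a.1 ∘ b.1 ∘ π
    rw [← Function.comp_assoc, ha, Function.comp_assoc, hb]
  inv_mem' {a} (ha : π ∘ a.2 = a.1 ∘ π) := by
    change π ∘ a.2.symm = a.1.symm ∘ π
    rw [Equiv.comp_symm_eq, Function.comp_assoc, ha, ← Function.comp_assoc, symm_comp_self,
      Function.id_comp]

namespace isoGroup

/-- The action of the isomorphism group on the vertices. -/
def toPermVertices : isoGroup π →* Perm V :=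
  (MonoidHom.fst _ _).comp (isoGroup π).subtype

theorem mem_range_toPermVertices {g : Perm V} :
    g ∈ (toPermVertices π).range ↔ ∃ e : Perm H, π ∘ e = g ∘ π :=
  ⟨fun ⟨⟨x, hx⟩, hg⟩ ↦ ⟨x.2, hg ▸ hx⟩, fun ⟨e, he⟩ ↦ ⟨⟨(g, e), he⟩, rfl⟩⟩

/-- An isomorphism fixing all vertices is a permutation of the half-edges within the fibres. -/
def kerToPermVerticesEquiv : (toPermVertices π).ker ≃ {e : Perm H // π ∘ e = π} where
  toFun g := ⟨g.1.1.2, g.1.2.trans (congrArg (fun g : Perm V ↦ g ∘ π) g.2)⟩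
  invFun e := ⟨⟨(1, e.1), e.2⟩, rfl⟩
  left_inv := fun ⟨_, hg⟩ ↦ Subtype.ext (Subtype.ext (Prod.ext hg.symm rfl))
  right_inv _ := rfl

end isoGroup

variable [Fintype H] [DecidableEq V]

/-- The number of half-edges attached to a vertex, so that `β(k)` is `#{v | valence π v = k}`. -/
def valence (v : V) : ℕ := #{h | π h = v}

theorem valence_mem_range (v : V) : valence π v ∈ Finset.range (Fintype.card H + 1) :=
  Finset.mem_range_succ_iff.2 (Finset.card_le_univ _)

theorem exists_perm_comp_eq_iff_valence_comp_eq {g : Perm V} :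
    (∃ e : Perm H, π ∘ e = g ∘ π) ↔ valence π ∘ g = valence π := by
  have valence_symm (v : V) : Nat.card {h // g (π h) = v} = valence π (g.symm v) := by
    simp only [← Equiv.eq_symm_apply, Nat.card_eq_fintype_card, Fintype.card_subtype, valence]
  have valence_eq (v : V) : Nat.card {h // π h = v} = valence π v := by
    simp only [Nat.card_eq_fintype_card, Fintype.card_subtype, valence]
  simp only [exists_equiv_comp_eq_iff_card_fiber_eq, Function.comp_apply, valence_symm, valence_eq]
  exact funext_iff.symm.trans ((Equiv.comp_symm_eq g _ (valence π)).trans eq_comm)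

theorem card_isoGroup :
    Nat.card (isoGroup π) =
      Nat.card {g : Perm V // valence π ∘ g = valence π} * Nat.card {e : Perm H // π ∘ e = π} := by
  have card_range : Nat.card (isoGroup.toPermVertices π).range =
      Nat.card {g : Perm V // valence π ∘ g = valence π} :=
    Nat.card_congr (subtypeEquivRight fun _ ↦
      (isoGroup.mem_range_toPermVertices π).trans (exists_perm_comp_eq_iff_valence_comp_eq π))
  rw [← card_range, ← Nat.card_congr (isoGroup.kerToPermVerticesEquiv π), ← Subgroup.index_ker,
    Subgroup.index_mul_card]

theorem card_perm_comp_eq_self_eq_prod_factorial_pow [Fintype V] :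
    Nat.card {e : Perm H // π ∘ e = π} =
      ∏ k ∈ Finset.range (Fintype.card H + 1), k ! ^ #{v | valence π v = k} := by
  calc
    Nat.card {e : Perm H // π ∘ e = π} = ∏ v, (valence π v)! :=
      card_perm_comp_eq_self fun _ ↦ Finset.mem_univ _
    _ = ∏ k ∈ Finset.range (Fintype.card H + 1), k ! ^ #{v | valence π v = k} := by
      simp only [← Finset.prod_fiberwise_of_maps_to' (fun v _ ↦ valence_mem_range π v),
        Finset.prod_const]

theorem stmt_4_general [Fintype V] (σ : Perm H) :
    Nat.card {τ : Perm H // ∃ g ∈ isoGroup π, g.2 * σ * g.2⁻¹ = τ} *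
      Nat.card {g : Perm V × Perm H // g ∈ isoGroup π ∧ g.2 * σ * g.2⁻¹ = σ} =
      ∏ k ∈ Finset.range (Fintype.card H + 1),
        (#{v | valence π v = k})! * k ! ^ #{v | valence π v = k} := by
  have orbit_stabilizer :=
    card_conj_orbit_mul_card_conj_stabilizer (isoGroup π) (MonoidHom.snd _ _) σ
  rw [MonoidHom.coe_snd] at orbit_stabilizer
  rw [orbit_stabilizer, card_isoGroup, card_perm_comp_eq_self (valence_mem_range π),
    card_perm_comp_eq_self_eq_prod_factorial_pow, Finset.prod_mul_distrib]

end FeynmanDiagram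

/-- Orbit–stabiliser identity for pairings.  Let `π : H → V` attach
half-edges to vertices and let `σ` be a pairing: a fixed-point-free involution of `H`
with `π (σ h) ≠ π h` for all `h` (no self-connected vertices), encoding a Feynman
diagram `Γ`.  The isomorphism group `G = {(g_V, g_H) : π ∘ g_H = g_V ∘ π}` acts on
pairings by `(g_V, g_H) · σ = g_H ∘ σ ∘ g_H⁻¹`, and
`|Orb(σ)| · |Stab(σ)| = ∏_k β(k)! · (k!)^{β(k)}`; i.e. `S_M(Φ(Γ)) = N(Γ) · S_F(Γ)`. -/
theorem stmt_4 (H V : Type) [Fintype H] [Fintype V] [DecidableEq H] [DecidableEq V]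
    (π : H → V) (σ : Equiv.Perm H)
    (hfpf : ∀ h, σ h ≠ h) (hinv : σ * σ = 1) (hself : ∀ h, π (σ h) ≠ π h) :
    Nat.card {τ : Equiv.Perm H // ∃ g : Equiv.Perm V × Equiv.Perm H,
        (π ∘ ⇑g.2 = ⇑g.1 ∘ π) ∧ g.2 * σ * g.2⁻¹ = τ} *
      Nat.card {g : Equiv.Perm V × Equiv.Perm H //
        (π ∘ ⇑g.2 = ⇑g.1 ∘ π) ∧ g.2 * σ * g.2⁻¹ = σ} =
      ∏ k ∈ Finset.range (Fintype.card H + 1),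
        Nat.factorial
            (Finset.univ.filter
              (fun v : V => (Finset.univ.filter (fun h : H => π h = v)).card = k)).card *
          Nat.factorial k ^
            (Finset.univ.filter
              (fun v : V => (Finset.univ.filter (fun h : H => π h = v)).card = k)).card :=
  stmt_4_general π σ
end

section
/- For all integers m ≥ 1 and n ≥ 2m, π_{2,4}( Σ_{k_1,…,k_m ∈ ℕ} (∏_{i=1}^m D^{k_i}(z_3²)) · ((∏_{i=1}^m ∂_{z_{k_i}})(z_2^m · z_4^{n−2m})) ) = 2^m · m! · z_4^n; that is, the rule-restricted simultaneous insertion of m copies of z_3² into z_2^m z_4^{n−2m} for the Φ⁴ rule {2,4} equals 2^m m! z_4^n. -/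
/-- The derivation `D = Σ_k z_{k+1} ∂_{z_k}` on `R = ℚ[z_0, z_1, …]`, determined by
`D z_k = z_{k+1}`. -/
noncomputable def Dz : Derivation ℚ (MvPolynomial ℕ ℚ) (MvPolynomial ℕ ℚ) :=
  MvPolynomial.mkDerivation ℚ (fun k => MvPolynomial.X (k + 1))

/-- Iterated partial derivatives `(∏_i ∂_{z_{k_i}}) P`. -/
noncomputable def pders (ks : List ℕ) (P : MvPolynomial ℕ ℚ) : MvPolynomial ℕ ℚ :=
  ks.foldr (fun j Q => MvPolynomial.pderiv j Q) P

/-- The projection `π_{2,4}` keeping exactly the monomials `z^γ` with `γ` supported in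
`{2, 4}` (the rule of the `Φ⁴` model). -/
noncomputable def proj24 (P : MvPolynomial ℕ ℚ) : MvPolynomial ℕ ℚ :=
  ∑ γ ∈ P.support,
    if γ.support ⊆ ({2, 4} : Finset ℕ) then MvPolynomial.monomial γ (MvPolynomial.coeff γ P)
    else 0

/-!
The projection `π_{2,4}` is the substitution `z_k ↦ 0` for `k ∉ {2, 4}`, hence an algebra
homomorphism, so it may be applied to each factor of the insertion sum. By the Leibniz rule
`D^k(z_3²) = Σ_{i+j=k} binom(k, i) z_{3+i} z_{3+j}`, and `3 + i ∈ {2, 4}` only for `i = 1`; hence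
`π_{2,4}(D^k(z_3²))` is `2 z_4²` for `k = 2` and `0` otherwise. Only `k_1 = ⋯ = k_m = 2` survives,
contributing `(2 z_4²)^m` times `∂_{z_2}^m (z_2^m z_4^{n-2m}) = m! z_4^{n-2m}`.
-/

open MvPolynomial Finset

section IteratedDerivation

variable {R A : Type*} [CommSemiring R] [CommSemiring A] [Algebra R A]

theorem iterate_derivation_mul (D : Derivation R A A) (n : ℕ) (a b : A) :
    D^[n] (a * b) = ∑ ij ∈ antidiagonal n, n.choose ij.1 • (D^[ij.1] a * D^[ij.2] b) := by
  induction n with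
  | zero => simp
  | succ n ih =>
    have leibniz (i j : ℕ) : D (D^[i] a * D^[j] b) =
        D^[i] a * D^[j + 1] b + D^[i + 1] a * D^[j] b := by
      simp only [Derivation.leibniz, smul_eq_mul, Function.iterate_succ_apply']
      rw [mul_comm (D^[j] b)]
    rw [sum_antidiagonal_choose_succ_nsmul (fun i j => D^[i] a * D^[j] b) n,
      Function.iterate_succ_apply', ih, map_sum, ← sum_add_distrib]
    refine sum_congr rfl fun ij hij => ?_
    rw [map_nsmul, leibniz, smul_add, n.choose_symm_of_eq_add (mem_antidiagonal.1 hij).symm]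

theorem iterate_derivation_pow_mul (D : Derivation R A A) {x a : A} (hx : D x = 1) (ha : D a = 0)
    (n k : ℕ) : D^[k] (x ^ n * a) = n.descFactorial k • (x ^ (n - k) * a) := by
  induction k with
  | zero => simp
  | succ k ih =>
    rw [Function.iterate_succ_apply', ih, map_nsmul, Derivation.leibniz, Derivation.leibniz_pow,
      hx, ha, Nat.descFactorial_succ, Nat.sub_add_eq]
    simp only [nsmul_eq_mul, smul_eq_mul, Nat.cast_mul]
    ring

end IteratedDerivation

section KeepVars

variable {σ R : Type*} [CommSemiring R]

/-- The substitution sending every variable outside `s` to `0`. It keeps the monomials supported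
in `s` and kills all others, which makes the projection onto them an algebra homomorphism. -/
noncomputable def keepVars (s : Set σ) : MvPolynomial σ R →ₐ[R] MvPolynomial σ R :=
  aeval (s.indicator X)

variable {s : Set σ}

theorem keepVars_X_of_mem {i : σ} (hi : i ∈ s) : keepVars s (X i : MvPolynomial σ R) = X i := by
  rw [keepVars, aeval_X, Set.indicator_of_mem hi]

theorem keepVars_X_of_notMem {i : σ} (hi : i ∉ s) : keepVars s (X i : MvPolynomial σ R) = 0 := by
  rw [keepVars, aeval_X, Set.indicator_of_notMem hi]

theorem keepVars_monomial_of_subset {γ : σ →₀ ℕ} (hγ : ↑γ.support ⊆ s) (c : R) :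
    keepVars s (monomial γ c) = monomial γ c := by
  rw [monomial_eq, map_mul, algHom_C, algebraMap_eq, Finsupp.prod, map_prod]
  congr 1
  refine prod_congr rfl fun i hi => ?_
  rw [map_pow, keepVars_X_of_mem (hγ hi)]

theorem keepVars_monomial_of_not_subset {γ : σ →₀ ℕ} (hγ : ¬ ↑γ.support ⊆ s) (c : R) :
    keepVars s (monomial γ c) = 0 := by
  obtain ⟨i, hi, his⟩ := Set.not_subset.1 hγ
  have hfactor : keepVars s (X i ^ γ i : MvPolynomial σ R) = 0 := by
    rw [map_pow, keepVars_X_of_notMem his, zero_pow (Finsupp.mem_support_iff.1 hi)]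
  rw [monomial_eq, map_mul, Finsupp.prod, map_prod, prod_eq_zero hi hfactor, mul_zero]

end KeepVars

theorem proj24_eq_keepVars (P : MvPolynomial ℕ ℚ) : proj24 P = keepVars {2, 4} P := by
  conv_rhs => rw [P.as_sum, map_sum]
  refine sum_congr rfl fun γ _ => ?_
  have hcoe : γ.support ⊆ {2, 4} ↔ (γ.support : Set ℕ) ⊆ {2, 4} := by
    rw [← coe_subset, coe_pair]
  split_ifs with hγ
  · exact (keepVars_monomial_of_subset (hcoe.1 hγ) _).symm
  · exact (keepVars_monomial_of_not_subset (mt hcoe.2 hγ) _).symm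

theorem pderiv_mem_supported {σ R : Type*} [CommSemiring R] {s : Set σ} {P : MvPolynomial σ R}
    (hP : P ∈ supported R s) (i : σ) : pderiv i P ∈ supported R s := by
  classical
  induction hP using Algebra.adjoin_induction with
  | mem x hx =>
    obtain ⟨j, -, rfl⟩ := hx
    rw [pderiv_X, Pi.single_apply]
    split_ifs
    exacts [one_mem _, zero_mem _]
  | algebraMap r => exact pderiv_C (R := R) (i := i) ▸ zero_mem _
  | add x y _ _ ihx ihy => exact map_add (pderiv i) x y ▸ add_mem ihx ihy
  | mul x y hx hy ihx ihy => exact pderiv_mul (R := R) ▸ add_mem (mul_mem ihx hy) (mul_mem hx ihy)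

theorem pders_cons (k : ℕ) (ks : List ℕ) (P : MvPolynomial ℕ ℚ) :
    pders (k :: ks) P = pderiv k (pders ks P) := rfl

theorem pders_replicate (m k : ℕ) (P : MvPolynomial ℕ ℚ) :
    pders (List.replicate m k) P = (pderiv k)^[m] P := by
  induction m with
  | zero => rfl
  | succ m ih => rw [List.replicate_succ, pders_cons, ih, Function.iterate_succ_apply']

theorem pders_mem_supported {s : Set ℕ} {P : MvPolynomial ℕ ℚ} (hP : P ∈ supported ℚ s)
    (ks : List ℕ) : pders ks P ∈ supported ℚ s := by
  induction ks with
  | nil => exact hP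
  | cons k ks ih => exact pderiv_mem_supported ih k

theorem pders_eq_zero_of_notMem_vars {k : ℕ} {ks : List ℕ} (hk : k ∈ ks)
    {P : MvPolynomial ℕ ℚ} (hP : k ∉ P.vars) : pders ks P = 0 := by
  induction ks with
  | nil => simp at hk
  | cons j ks ih =>
    rw [pders_cons]
    rcases List.mem_cons.1 hk with rfl | hk
    · have hvars := mem_supported.1 (pders_mem_supported (mem_supported_vars P) ks)
      exact pderiv_eq_zero_of_notMem_vars fun h => hP (hvars h)
    · rw [ih hk, map_zero]

theorem finite_support_pders_ofFn (m : ℕ) (P : MvPolynomial ℕ ℚ) :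
    (Function.support fun k : Fin m → ℕ => pders (List.ofFn k) P).Finite := by
  refine (Set.Finite.pi' fun _ : Fin m => P.vars.finite_toSet).subset fun k hk i => ?_
  by_contra hi
  exact hk <| pders_eq_zero_of_notMem_vars (List.mem_ofFn.2 ⟨i, rfl⟩) hi

theorem map_finsum_prod_mul_pders {A : Type*} [CommSemiring A] (φ : MvPolynomial ℕ ℚ →+* A)
    {q : ℕ → MvPolynomial ℕ ℚ} {j : ℕ} (hq : ∀ k, k ≠ j → φ (q k) = 0) (m : ℕ)
    (P : MvPolynomial ℕ ℚ) :
    φ (∑ᶠ k : Fin m → ℕ, (∏ i, q (k i)) * pders (List.ofFn k) P) =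
      φ (q j) ^ m * φ ((pderiv j)^[m] P) := by
  have hfinite : (Function.support fun k : Fin m → ℕ =>
      (∏ i, q (k i)) * pders (List.ofFn k) P).Finite :=
    (finite_support_pders_ofFn m P).subset (Function.support_mul_subset_right _ _)
  have hvanish (k : Fin m → ℕ) (hk : k ≠ fun _ => j) :
      φ ((∏ i, q (k i)) * pders (List.ofFn k) P) = 0 := by
    obtain ⟨i, hi⟩ := Function.ne_iff.1 hk
    rw [map_mul, map_prod, prod_eq_zero (mem_univ i) (hq _ hi), zero_mul]
  rw [map_finsum φ hfinite, finsum_eq_single _ _ hvanish, map_mul, map_prod, prod_const,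
    card_univ, Fintype.card_fin, List.ofFn_const, pders_replicate]

theorem iterate_Dz_X (k i : ℕ) : Dz^[k] (X i) = X (i + k) := by
  induction k with
  | zero => rfl
  | succ k ih => rw [Function.iterate_succ_apply', ih, Dz, mkDerivation_X, add_assoc]

theorem keepVars_iterate_Dz_X_three_sq (k : ℕ) :
    keepVars {2, 4} (Dz^[k] (X 3 ^ 2)) = if k = 2 then 2 * X 4 ^ 2 else 0 := by
  have hX (i : ℕ) : keepVars {2, 4} (X (3 + i) : MvPolynomial ℕ ℚ) = if i = 1 then X 4 else 0 := by
    split_ifs with hi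
    · subst hi
      exact keepVars_X_of_mem (by simp)
    · exact keepVars_X_of_notMem <| by
        simp only [Set.mem_insert_iff, Set.mem_singleton_iff]
        omega
  simp only [sq, iterate_derivation_mul, iterate_Dz_X, map_sum, map_nsmul, map_mul, hX]
  split_ifs with hk
  · subst hk
    simp [Nat.antidiagonal_succ]
  · refine sum_eq_zero fun ij hij => ?_
    have hsum : ij.1 + ij.2 = k := mem_antidiagonal.1 hij
    have hne : ij.1 ≠ 1 ∨ ij.2 ≠ 1 := by omega
    rcases hne with h | h <;> simp [h]

theorem iterate_pderiv_X_pow_mul_X_pow {σ R : Type*} [CommSemiring R] {i j : σ} (hij : j ≠ i)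
    (m b : ℕ) : (pderiv i)^[m] (X i ^ m * X j ^ b : MvPolynomial σ R) = m.factorial • X j ^ b := by
  have hXj : pderiv i (X j ^ b : MvPolynomial σ R) = 0 := by
    rw [pderiv_pow, pderiv_X_of_ne hij, mul_zero]
  rw [iterate_derivation_pow_mul _ (pderiv_X_self i) hXj, Nat.descFactorial_self, Nat.sub_self,
    pow_zero, one_mul]

/-- for `m ≥ 1` and `n ≥ 2m`, the rule-restricted simultaneous insertion of
`m` copies of `z_3²` into `z_2^m z_4^{n−2m}` for the `Φ⁴` rule `{2,4}` equals
`2^m · m! · z_4^n`: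
`π_{2,4}(Σ_{k_1,…,k_m} (∏_i D^{k_i}(z_3²)) · ((∏_i ∂_{z_{k_i}})(z_2^m z_4^{n−2m})))
  = 2^m m! z_4^n`. -/
theorem stmt_7 (m n : ℕ) (hm : 1 ≤ m) (hn : 2 * m ≤ n) :
    proj24 (∑ᶠ k : Fin m → ℕ,
        (∏ i, (⇑Dz)^[k i] ((MvPolynomial.X 3 : MvPolynomial ℕ ℚ) ^ 2)) *
          pders (List.ofFn k)
            ((MvPolynomial.X 2 : MvPolynomial ℕ ℚ) ^ m * MvPolynomial.X 4 ^ (n - 2 * m)))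
      = MvPolynomial.C ((2 : ℚ) ^ m * m.factorial) * MvPolynomial.X 4 ^ n := by
  have hX4 : keepVars {2, 4} (X 4 : MvPolynomial ℕ ℚ) = X 4 := keepVars_X_of_mem (by simp)
  have hvanish (k : ℕ) (hk : k ≠ 2) : keepVars {2, 4} (Dz^[k] (X 3 ^ 2)) = 0 := by
    rw [keepVars_iterate_Dz_X_three_sq, if_neg hk]
  calc
    _ = keepVars {2, 4} (Dz^[2] (X 3 ^ 2)) ^ m *
          keepVars {2, 4} ((pderiv 2)^[m] (X 2 ^ m * X 4 ^ (n - 2 * m))) := by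
      rw [proj24_eq_keepVars]
      exact map_finsum_prod_mul_pders (keepVars {2, 4}).toRingHom hvanish m _
    _ = (2 * X 4 ^ 2) ^ m * m.factorial • X 4 ^ (n - 2 * m) := by
      rw [keepVars_iterate_Dz_X_three_sq, if_pos rfl, iterate_pderiv_X_pow_mul_X_pow (by decide),
        map_nsmul, map_pow, hX4]
    _ = C ((2 : ℚ) ^ m * m.factorial) * X 4 ^ (2 * m + (n - 2 * m)) := by
      rw [map_mul, map_pow, map_ofNat, map_natCast, nsmul_eq_mul]
      ring
    _ = _ := by rw [Nat.add_sub_cancel' hn]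
end
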